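/- arXiv:1507.07139 — 2 statements merged into one kernel-verified Lean document; each statement's English description precedes it below -/
import Mathlib

section
/- If w : [0,1] → ℝ is continuously differentiable, w ≠ 0, ∫₀¹ w(x) μ(x) dx = 0, and λ is a real number such that ∫₀¹ w'(x) v'(x) σ²(x) μ(x) dx = 2λ ∫₀¹ w(x) v(x) μ(x) dx for every continuously differentiable v : [0,1] → ℝ, then 2λ ≥ d²/D. -/
/-- `u` is continuously differentiable on `[0,1]` with derivative `u'`. -/
def IsC1On01 (u u' : ℝ → ℝ) : Prop :=
  (∀ x ∈ Set.Icc (0:ℝ) 1, HasDerivAt u (u' x) x) ∧ ContinuousOn u' (Set.Icc (0:ℝ) 1)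

/-!
Test the weak equation with the eigenfunction itself: writing `E = ∫ w'²`, the energy identity and
the lower bound `m` of the coefficient `p` give `m E ≤ Λ ∫ w² μ`. Since `w` has `μ`-mean zero,
`∫ w² μ ≤ ∫ (w - c)² μ` for every constant `c`; with `c = w a`, Cauchy–Schwarz bounds the right-hand
side by `(b - a) (∫ μ) E`. Finally `E > 0`, because a constant with `μ`-mean zero vanishes, so `E`
cancels and `m ≤ Λ (b - a) ∫ μ`.
-/

open MeasureTheory Set

open scoped Interval

section

variable {a b m M Λ : ℝ} {f w w' p μ : ℝ → ℝ}

theorem sq_integral_le_measureReal_univ_mul_integral_sq {α : Type*} [MeasurableSpace α]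
    {ν : Measure α} [IsFiniteMeasure ν] {f : α → ℝ} (hf : Integrable f ν)
    (hf_sq : Integrable (fun x ↦ f x ^ 2) ν) :
    (∫ x, f x ∂ν) ^ 2 ≤ ν.real univ * ∫ x, f x ^ 2 ∂ν := by
  rcases eq_zero_or_neZero ν with rfl | hν
  · simp
  have hmass : 0 < ν.real univ := measureReal_univ_pos
  have jensen : (⨍ x, f x ∂ν) ^ 2 ≤ ⨍ x, f x ^ 2 ∂ν :=
    even_two.convexOn_pow.map_average_le (continuous_pow 2).continuousOn isClosed_univ
      (.of_forall fun x ↦ mem_univ (f x)) hf hf_sq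
  rw [average_eq, average_eq, smul_eq_mul, smul_eq_mul] at jensen
  calc (∫ x, f x ∂ν) ^ 2
      = ν.real univ ^ 2 * ((ν.real univ)⁻¹ * ∫ x, f x ∂ν) ^ 2 := by field_simp
    _ ≤ ν.real univ ^ 2 * ((ν.real univ)⁻¹ * ∫ x, f x ^ 2 ∂ν) := by gcongr
    _ = ν.real univ * ∫ x, f x ^ 2 ∂ν := by field_simp

theorem sq_intervalIntegral_le_sub_mul_intervalIntegral_sq (hab : a ≤ b)
    (hf : IntervalIntegrable f volume a b)
    (hf_sq : IntervalIntegrable (fun x ↦ f x ^ 2) volume a b) :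
    (∫ x in a..b, f x) ^ 2 ≤ (b - a) * ∫ x in a..b, f x ^ 2 := by
  simpa [intervalIntegral.integral_of_le hab, measureReal_restrict_apply, hab] using
    sq_integral_le_measureReal_univ_mul_integral_sq hf.1 hf_sq.1

theorem sq_sub_left_le_sub_mul_integral_sq_deriv (hw : ContinuousOn w (Icc a b))
    (hderiv : ∀ x ∈ Ioo a b, HasDerivAt w (w' x) x) (hw' : IntervalIntegrable w' volume a b)
    (hw'_sq : IntervalIntegrable (fun x ↦ w' x ^ 2) volume a b) {x : ℝ} (hx : x ∈ Icc a b) :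
    (w x - w a) ^ 2 ≤ (b - a) * ∫ t in a..b, w' t ^ 2 := by
  have hsub : [[a, x]] ⊆ [[a, b]] := uIcc_subset_uIcc_left (Icc_subset_uIcc hx)
  have hftc : ∫ t in a..x, w' t = w x - w a :=
    intervalIntegral.integral_eq_sub_of_hasDerivAt_of_le hx.1
      (hw.mono (Icc_subset_Icc_right hx.2))
      (fun t ht ↦ hderiv t (Ioo_subset_Ioo_right hx.2 ht)) (hw'.mono_set hsub)
  calc (w x - w a) ^ 2
      = (∫ t in a..x, w' t) ^ 2 := by rw [hftc]
    _ ≤ (x - a) * ∫ t in a..x, w' t ^ 2 :=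
        sq_intervalIntegral_le_sub_mul_intervalIntegral_sq hx.1 (hw'.mono_set hsub)
          (hw'_sq.mono_set hsub)
    _ ≤ (b - a) * ∫ t in a..b, w' t ^ 2 := by
        gcongr
        · exact intervalIntegral.integral_nonneg_of_forall hx.1 fun t ↦ sq_nonneg (w' t)
        · linarith [hx.1, hx.2]
        · exact hx.2
        · exact intervalIntegral.integral_mono_interval le_rfl hx.1 hx.2
            (.of_forall fun t ↦ sq_nonneg (w' t)) hw'_sq

theorem integral_sub_const_sq_mul_of_integral_mul_eq_zero
    (hμ : IntervalIntegrable μ volume a b) (hw : ContinuousOn w [[a, b]])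
    (hmean : ∫ x in a..b, w x * μ x = 0) (c : ℝ) :
    ∫ x in a..b, (w x - c) ^ 2 * μ x =
      (∫ x in a..b, w x ^ 2 * μ x) + c ^ 2 * ∫ x in a..b, μ x := by
  have hwμ : IntervalIntegrable (fun x ↦ 2 * c * (w x * μ x)) volume a b :=
    (hμ.continuousOn_mul hw).const_mul _
  have hw_sq : IntervalIntegrable (fun x ↦ w x ^ 2 * μ x) volume a b :=
    hμ.continuousOn_mul (hw.pow 2)
  calc ∫ x in a..b, (w x - c) ^ 2 * μ x
      = ∫ x in a..b, (w x ^ 2 * μ x - 2 * c * (w x * μ x) + c ^ 2 * μ x) := by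
        congr! 2 with x
        ring
    _ = (∫ x in a..b, w x ^ 2 * μ x) + c ^ 2 * ∫ x in a..b, μ x := by
        rw [intervalIntegral.integral_add (hw_sq.sub hwμ) (hμ.const_mul _),
          intervalIntegral.integral_sub hw_sq hwμ, intervalIntegral.integral_const_mul,
          intervalIntegral.integral_const_mul, hmean, mul_zero, sub_zero]

theorem weighted_poincare_inequality (hab : a ≤ b) (hμ : IntervalIntegrable μ volume a b)
    (hμ_nonneg : ∀ x ∈ Icc a b, 0 ≤ μ x) (hw : ContinuousOn w (Icc a b))
    (hderiv : ∀ x ∈ Ioo a b, HasDerivAt w (w' x) x) (hw' : IntervalIntegrable w' volume a b)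
    (hw'_sq : IntervalIntegrable (fun x ↦ w' x ^ 2) volume a b)
    (hmean : ∫ x in a..b, w x * μ x = 0) :
    ∫ x in a..b, w x ^ 2 * μ x ≤ ((b - a) * ∫ x in a..b, μ x) * ∫ x in a..b, w' x ^ 2 := by
  have hw_uIcc : ContinuousOn w [[a, b]] := by rwa [uIcc_of_le hab]
  have hmass : 0 ≤ ∫ x in a..b, μ x := intervalIntegral.integral_nonneg hab hμ_nonneg
  calc ∫ x in a..b, w x ^ 2 * μ x
      ≤ (∫ x in a..b, w x ^ 2 * μ x) + w a ^ 2 * ∫ x in a..b, μ x :=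
        le_add_of_nonneg_right (by positivity)
    _ = ∫ x in a..b, (w x - w a) ^ 2 * μ x :=
        (integral_sub_const_sq_mul_of_integral_mul_eq_zero hμ hw_uIcc hmean (w a)).symm
    _ ≤ ∫ x in a..b, ((b - a) * ∫ t in a..b, w' t ^ 2) * μ x := by
        refine intervalIntegral.integral_mono_on hab
          (hμ.continuousOn_mul ((hw_uIcc.sub continuousOn_const).pow 2)) (hμ.const_mul _)
          fun x hx ↦ mul_le_mul_of_nonneg_right ?_ (hμ_nonneg x hx)
        exact sq_sub_left_le_sub_mul_integral_sq_deriv hw hderiv hw' hw'_sq hx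
    _ = ((b - a) * ∫ x in a..b, μ x) * ∫ x in a..b, w' x ^ 2 := by
        rw [intervalIntegral.integral_const_mul]
        ring

theorem integral_sq_deriv_pos_of_integral_mul_eq_zero (hmass : ∫ x in a..b, μ x ≠ 0)
    (hw : ContinuousOn w (Icc a b)) (hderiv : ∀ x ∈ Ioo a b, HasDerivAt w (w' x) x)
    (hw' : IntervalIntegrable w' volume a b)
    (hw'_sq : IntervalIntegrable (fun x ↦ w' x ^ 2) volume a b)
    (hw_ne : ∃ x ∈ Icc a b, w x ≠ 0) (hmean : ∫ x in a..b, w x * μ x = 0) :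
    0 < ∫ x in a..b, w' x ^ 2 := by
  obtain ⟨x, hx, hwx⟩ := hw_ne
  have hab : a ≤ b := hx.1.trans hx.2
  by_contra! hE
  have hconst : ∀ y ∈ Icc a b, w y = w a := fun y hy ↦ by
    have hsq : (w y - w a) ^ 2 ≤ 0 :=
      (sq_sub_left_le_sub_mul_integral_sq_deriv hw hderiv hw' hw'_sq hy).trans
        (mul_nonpos_of_nonneg_of_nonpos (sub_nonneg.2 hab) hE)
    exact sub_eq_zero.1 (pow_eq_zero_iff two_ne_zero |>.1 (hsq.antisymm (sq_nonneg _)))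
  have hmean_const : w a * ∫ x in a..b, μ x = 0 := by
    rw [← hmean, ← intervalIntegral.integral_const_mul]
    exact intervalIntegral.integral_congr fun y hy ↦ by
      rw [hconst y (by rwa [uIcc_of_le hab] at hy)]
  exact hwx ((hconst x hx).trans ((mul_eq_zero.1 hmean_const).resolve_right hmass))

theorem intervalIntegrable_sq_of_intervalIntegrable_sq_mul (hab : a ≤ b) (hm : 0 < m)
    (hp : ∀ x ∈ Icc a b, m ≤ p x) (hf : IntervalIntegrable f volume a b)
    (hfp : IntervalIntegrable (fun x ↦ f x ^ 2 * p x) volume a b) :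
    IntervalIntegrable (fun x ↦ f x ^ 2) volume a b := by
  refine (hfp.div_const m).mono_fun' (hf.def'.aestronglyMeasurable.pow 2) ?_
  filter_upwards [ae_restrict_mem measurableSet_uIoc] with x hx
  rw [uIoc_of_le hab] at hx
  rw [Real.norm_of_nonneg (sq_nonneg _), le_div_iff₀ hm]
  gcongr
  exact hp x (Ioc_subset_Icc_self hx)

/-- The hypothesis `henergy` is the weak Neumann problem `-(p w')' = Λ μ w` tested with `w`. -/
theorem statement9_general (hm : 0 < m) (hp : ∀ x ∈ Icc a b, m ≤ p x)
    (hμ : IntervalIntegrable μ volume a b) (hμ_nonneg : ∀ x ∈ Icc a b, 0 ≤ μ x)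
    (hmass : ∫ x in a..b, μ x ≠ 0) (hw : ContinuousOn w (Icc a b))
    (hderiv : ∀ x ∈ Ioo a b, HasDerivAt w (w' x) x) (hw' : IntervalIntegrable w' volume a b)
    (hw'p : IntervalIntegrable (fun x ↦ w' x ^ 2 * p x) volume a b)
    (hw_ne : ∃ x ∈ Icc a b, w x ≠ 0) (hmean : ∫ x in a..b, w x * μ x = 0)
    (henergy : ∫ x in a..b, w' x ^ 2 * p x = Λ * ∫ x in a..b, w x ^ 2 * μ x) :
    m / ((b - a) * ∫ x in a..b, μ x) ≤ Λ := by
  have hab : a ≤ b := let ⟨_, hx, _⟩ := hw_ne; hx.1.trans hx.2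
  have hw'_sq : IntervalIntegrable (fun x ↦ w' x ^ 2) volume a b :=
    intervalIntegrable_sq_of_intervalIntegrable_sq_mul hab hm hp hw' hw'p
  have hE : 0 < ∫ x in a..b, w' x ^ 2 :=
    integral_sq_deriv_pos_of_integral_mul_eq_zero hmass hw hderiv hw' hw'_sq hw_ne hmean
  have hcoercive : m * ∫ x in a..b, w' x ^ 2 ≤ Λ * ∫ x in a..b, w x ^ 2 * μ x := by
    rw [← henergy, ← intervalIntegral.integral_const_mul]
    refine intervalIntegral.integral_mono_on hab (hw'_sq.const_mul m) hw'p fun x hx ↦ ?_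
    rw [mul_comm]
    exact mul_le_mul_of_nonneg_left (hp x hx) (sq_nonneg _)
  have hnorm : 0 ≤ ∫ x in a..b, w x ^ 2 * μ x :=
    intervalIntegral.integral_nonneg hab fun x hx ↦ mul_nonneg (sq_nonneg _) (hμ_nonneg x hx)
  have hΛ : 0 ≤ Λ := (pos_of_mul_pos_left ((mul_pos hm hE).trans_le hcoercive) hnorm).le
  have hmass_nonneg : 0 ≤ ∫ x in a..b, μ x := intervalIntegral.integral_nonneg hab hμ_nonneg
  refine div_le_of_le_mul₀ (mul_nonneg (sub_nonneg.2 hab) hmass_nonneg) hΛ ?_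
  refine le_of_mul_le_mul_right ?_ hE
  calc m * ∫ x in a..b, w' x ^ 2
      ≤ Λ * ∫ x in a..b, w x ^ 2 * μ x := hcoercive
    _ ≤ Λ * (((b - a) * ∫ x in a..b, μ x) * ∫ x in a..b, w' x ^ 2) := by
        gcongr
        exact weighted_poincare_inequality hab hμ hμ_nonneg hw hderiv hw' hw'_sq hmean
    _ = Λ * ((b - a) * ∫ x in a..b, μ x) * ∫ x in a..b, w' x ^ 2 := (mul_assoc _ _ _).symm

theorem intervalIntegrable_of_forall_mem_Icc (hab : a ≤ b) (hf : Measurable f)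
    (hbound : ∀ x ∈ Icc a b, f x ∈ Icc m M) : IntervalIntegrable f volume a b := by
  rw [intervalIntegrable_iff_integrableOn_Icc_of_le hab]
  exact .of_mem_Icc m M hf.aemeasurable (ae_restrict_of_forall_mem measurableSet_Icc hbound)

theorem intervalIntegral_mem_Icc_of_forall_mem_Icc (hab : a ≤ b)
    (hf : IntervalIntegrable f volume a b) (hbound : ∀ x ∈ Icc a b, f x ∈ Icc m M) :
    ∫ x in a..b, f x ∈ Icc ((b - a) * m) ((b - a) * M) := by
  constructor
  · simpa using intervalIntegral.integral_mono_on hab (intervalIntegrable_const (c := m)) hf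
      fun x hx ↦ (hbound x hx).1
  · simpa using intervalIntegral.integral_mono_on hab hf (intervalIntegrable_const (c := M))
      fun x hx ↦ (hbound x hx).2

theorem mul_mem_Icc_sq (hm : 0 ≤ m) {x y : ℝ} (hx : x ∈ Icc m M) (hy : y ∈ Icc m M) :
    x * y ∈ Icc (m ^ 2) (M ^ 2) := by
  rw [sq, sq]
  exact ⟨mul_le_mul hx.1 hy.1 hm (hm.trans hx.1),
    mul_le_mul hx.2 hy.2 (hm.trans hy.1) (hm.trans (hx.1.trans hx.2))⟩

end

/-- If `d ≤ σ² ≤ D`, `d ≤ μ ≤ D` on `[0,1]` and `(λ, w)` is a nontrivial solution of the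
weak Neumann eigenproblem with `∫₀¹ w μ = 0`, then `2λ ≥ d²/D`. -/
theorem statement9 (d D : ℝ) (hd : 0 < d) (hdD : d < D)
    (σ μ : ℝ → ℝ) (hσm : Measurable σ) (hμm : Measurable μ)
    (hσ : ∀ x ∈ Set.Icc (0:ℝ) 1, d ≤ (σ x)^2 ∧ (σ x)^2 ≤ D)
    (hμ : ∀ x ∈ Set.Icc (0:ℝ) 1, d ≤ μ x ∧ μ x ≤ D)
    (w w' : ℝ → ℝ) (hw : IsC1On01 w w')
    (hw0 : ∃ x ∈ Set.Icc (0:ℝ) 1, w x ≠ 0)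
    (hmean : (∫ x in (0:ℝ)..1, w x * μ x) = 0)
    (lam : ℝ)
    (heig : ∀ v v' : ℝ → ℝ, IsC1On01 v v' →
      ∫ x in (0:ℝ)..1, w' x * v' x * (σ x)^2 * μ x
        = 2 * lam * ∫ x in (0:ℝ)..1, w x * v x * μ x) :
    2 * lam ≥ d^2 / D := by
  have hσμ_mem : ∀ x ∈ Icc (0 : ℝ) 1, σ x ^ 2 * μ x ∈ Icc (d ^ 2) (D ^ 2) :=
    fun x hx ↦ mul_mem_Icc_sq hd.le (hσ x hx) (hμ x hx)
  have hμ_int := intervalIntegrable_of_forall_mem_Icc zero_le_one hμm hμ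
  have hσμ_int :=
    intervalIntegrable_of_forall_mem_Icc zero_le_one ((hσm.pow_const 2).mul hμm) hσμ_mem
  obtain ⟨hmass_ge, hmass_le⟩ := intervalIntegral_mem_Icc_of_forall_mem_Icc zero_le_one hμ_int hμ
  have hmass : 0 < ∫ x in (0 : ℝ)..1, μ x := by linarith
  have hw'_cont : ContinuousOn w' [[0, 1]] := by simpa only [uIcc_of_le zero_le_one] using hw.2
  calc d ^ 2 / D
      ≤ d ^ 2 / ((1 - 0) * ∫ x in (0 : ℝ)..1, μ x) := by gcongr; linarith
    _ ≤ 2 * lam :=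
        statement9_general (pow_pos hd 2) (fun x hx ↦ (hσμ_mem x hx).1) hμ_int
          (fun x hx ↦ hd.le.trans (hμ x hx).1) hmass.ne' (HasDerivAt.continuousOn hw.1)
          (fun x hx ↦ hw.1 x (Ioo_subset_Icc_self hx)) hw'_cont.intervalIntegrable
          (hσμ_int.continuousOn_mul (hw'_cont.pow 2)) hw0 hmean
          (by simpa only [sq, mul_assoc] using heig w w' hw)
end

section
/- For every function u in the linear span of {1, cos(πx), cos(2πx)} on [0,1] one has ∫₀¹ u'(x)² σ²(x) μ(x) dx ≤ (4π² D² / d) ∫₀¹ u(x)² μ(x) dx. (This three-dimensional test space yields the uniform upper bound 2λ₂ ≤ 4π² D²/d for the second variational Neumann eigenvalue of the form u ↦ ∫ u'² σ² μ.) -/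
/-!
On `[0, 1]` the functions `cos (kπx)`, `k ∈ ℕ`, are pairwise orthogonal, and so are their
derivatives `-kπ sin (kπx)`; moreover `∫₀¹ sin² (kπx) ≤ ∫₀¹ cos² (kπx)`. Expanding a cosine
polynomial `u` of degree `n` and comparing term by term gives the unweighted inequality
`∫₀¹ u'² ≤ (nπ)² ∫₀¹ u²`. The weights are then inserted at the cost of the factor `D² / d`, because
`σ² μ ≤ D²` and `d ≤ μ`.
-/

open MeasureTheory Real

section Integrals

theorem integral_mul_le_mul_integral_mul_of_integral_le {α : Type*} [MeasurableSpace α]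
    {ν : Measure α} {f g v w : α → ℝ} {K m M : ℝ} (hK : 0 ≤ K) (hm : 0 < m) (hM : 0 ≤ M)
    (hf : Integrable f ν) (hg : Integrable g ν)
    (hfv : Integrable (fun x ↦ f x * v x) ν) (hgw : Integrable (fun x ↦ g x * w x) ν)
    (hf_nonneg : 0 ≤ᵐ[ν] f) (hg_nonneg : 0 ≤ᵐ[ν] g)
    (hv : ∀ᵐ x ∂ν, v x ≤ M) (hw : ∀ᵐ x ∂ν, m ≤ w x)
    (hfg : ∫ x, f x ∂ν ≤ K * ∫ x, g x ∂ν) :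
    ∫ x, f x * v x ∂ν ≤ K * M / m * ∫ x, g x * w x ∂ν := by
  have integral_mul_le : ∫ x, f x * v x ∂ν ≤ (∫ x, f x ∂ν) * M := by
    rw [← integral_mul_const]
    refine integral_mono_ae hfv (hf.mul_const M) ?_
    filter_upwards [hf_nonneg, hv] with x hfx hvx using mul_le_mul_of_nonneg_left hvx hfx
  have le_integral_mul : (∫ x, g x ∂ν) * m ≤ ∫ x, g x * w x ∂ν := by
    rw [← integral_mul_const]
    refine integral_mono_ae (hg.mul_const m) hgw ?_
    filter_upwards [hg_nonneg, hw] with x hgx hwx using mul_le_mul_of_nonneg_left hwx hgx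
  calc ∫ x, f x * v x ∂ν
      ≤ (∫ x, f x ∂ν) * M := integral_mul_le
    _ ≤ (K * ∫ x, g x ∂ν) * M := by gcongr
    _ = K * M / m * ((∫ x, g x ∂ν) * m) := by field_simp
    _ ≤ K * M / m * ∫ x, g x * w x ∂ν := by gcongr

theorem intervalIntegral_sq_sum_of_pairwise_orthogonal {ι : Type*} {ν : Measure ℝ} {a b : ℝ}
    {s : Finset ι} {f : ι → ℝ → ℝ}
    (hint : ∀ i ∈ s, ∀ j ∈ s, IntervalIntegrable (fun x ↦ f i x * f j x) ν a b)
    (horth : ∀ i ∈ s, ∀ j ∈ s, i ≠ j → ∫ x in a..b, f i x * f j x ∂ν = 0) :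
    ∫ x in a..b, (∑ i ∈ s, f i x) ^ 2 ∂ν = ∑ i ∈ s, ∫ x in a..b, f i x ^ 2 ∂ν := by
  have hint_sum : ∀ i ∈ s, IntervalIntegrable (fun x ↦ ∑ j ∈ s, f i x * f j x) ν a b :=
    fun i hi ↦ by
      simpa only [Finset.sum_fn] using IntervalIntegrable.sum s fun j hj ↦ hint i hi j hj
  simp only [sq, Finset.sum_mul_sum]
  rw [intervalIntegral.integral_finsetSum hint_sum]
  refine Finset.sum_congr rfl fun i hi ↦ ?_
  rw [intervalIntegral.integral_finsetSum fun j hj ↦ hint i hi j hj]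
  exact Finset.sum_eq_single_of_mem i hi fun j hj hji ↦ horth i hi j hj hji.symm

end Integrals

section Orthogonality

theorem integral_cos_int_mul_pi (m : ℤ) :
    ∫ x in (0 : ℝ)..1, cos (m * π * x) = if m = 0 then 1 else 0 := by
  split_ifs with hm
  · simp [hm]
  · have hmπ : (m : ℝ) * π ≠ 0 := mul_ne_zero (mod_cast hm) pi_ne_zero
    rw [intervalIntegral.integral_comp_mul_left _ hmπ, integral_cos]
    simp [sin_int_mul_pi]

theorem intervalIntegrable_cos_int_mul_pi (m : ℤ) :
    IntervalIntegrable (fun x ↦ cos (m * π * x)) volume 0 1 :=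
  Continuous.intervalIntegrable (by fun_prop) 0 1

theorem integral_cos_mul_cos_nat_mul_pi (k l : ℕ) :
    ∫ x in (0 : ℝ)..1, cos (k * π * x) * cos (l * π * x) =
      ((if k = l then 1 else 0) + if k + l = 0 then 1 else 0) / 2 := by
  have product_to_sum (x : ℝ) : cos (k * π * x) * cos (l * π * x) =
      (cos (((k - l : ℤ) : ℝ) * π * x) + cos (((k + l : ℤ) : ℝ) * π * x)) / 2 := by
    have := two_mul_cos_mul_cos (k * π * x) (l * π * x)
    push_cast
    simp only [sub_mul, add_mul]
    linarith
  simp only [product_to_sum]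
  rw [intervalIntegral.integral_div, intervalIntegral.integral_add
    (intervalIntegrable_cos_int_mul_pi _) (intervalIntegrable_cos_int_mul_pi _)]
  simp only [integral_cos_int_mul_pi, sub_eq_zero, Nat.cast_inj]
  norm_cast

theorem integral_sin_mul_sin_nat_mul_pi (k l : ℕ) :
    ∫ x in (0 : ℝ)..1, sin (k * π * x) * sin (l * π * x) =
      ((if k = l then 1 else 0) - if k + l = 0 then 1 else 0) / 2 := by
  have product_to_sum (x : ℝ) : sin (k * π * x) * sin (l * π * x) =
      (cos (((k - l : ℤ) : ℝ) * π * x) - cos (((k + l : ℤ) : ℝ) * π * x)) / 2 := by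
    have := two_mul_sin_mul_sin (k * π * x) (l * π * x)
    push_cast
    simp only [sub_mul, add_mul]
    linarith
  simp only [product_to_sum]
  rw [intervalIntegral.integral_div, intervalIntegral.integral_sub
    (intervalIntegrable_cos_int_mul_pi _) (intervalIntegrable_cos_int_mul_pi _)]
  simp only [integral_cos_int_mul_pi, sub_eq_zero, Nat.cast_inj]
  norm_cast

theorem integral_cos_mul_cos_nat_mul_pi_of_ne {k l : ℕ} (hkl : k ≠ l) :
    ∫ x in (0 : ℝ)..1, cos (k * π * x) * cos (l * π * x) = 0 := by
  rw [integral_cos_mul_cos_nat_mul_pi, if_neg hkl, if_neg (by lia)]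
  norm_num

theorem integral_sin_mul_sin_nat_mul_pi_of_ne {k l : ℕ} (hkl : k ≠ l) :
    ∫ x in (0 : ℝ)..1, sin (k * π * x) * sin (l * π * x) = 0 := by
  rw [integral_sin_mul_sin_nat_mul_pi, if_neg hkl, if_neg (by lia)]
  norm_num

theorem integral_sin_sq_le_integral_cos_sq_nat_mul_pi (k : ℕ) :
    ∫ x in (0 : ℝ)..1, sin (k * π * x) ^ 2 ≤ ∫ x in (0 : ℝ)..1, cos (k * π * x) ^ 2 := by
  simp only [sq, integral_sin_mul_sin_nat_mul_pi, integral_cos_mul_cos_nat_mul_pi]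
  split_ifs <;> norm_num

end Orthogonality

/-- The cosine polynomial `∑ k ≤ n, a k * cos (kπx)` of degree at most `n`. Only the values
`a 0, …, a n` of the coefficient sequence matter. -/
noncomputable def cosinePolynomial (n : ℕ) (a : ℕ → ℝ) (x : ℝ) : ℝ :=
  ∑ k ∈ Finset.range (n + 1), a k * cos (k * π * x)

namespace cosinePolynomial

variable (n : ℕ) (a : ℕ → ℝ)

protected theorem hasDerivAt (x : ℝ) :
    HasDerivAt (cosinePolynomial n a)
      (∑ k ∈ Finset.range (n + 1), -(a k * (k * π)) * sin (k * π * x)) x := by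
  refine HasDerivAt.fun_sum fun k _ ↦ ?_
  have hcos := ((hasDerivAt_const_mul (k * π : ℝ)).cos (x := x)).const_mul (a k)
  exact hcos.congr_deriv (by ring)

protected theorem deriv :
    deriv (cosinePolynomial n a) =
      fun x ↦ ∑ k ∈ Finset.range (n + 1), -(a k * (k * π)) * sin (k * π * x) :=
  funext fun x ↦ (cosinePolynomial.hasDerivAt n a x).deriv

protected theorem continuous : Continuous (cosinePolynomial n a) := by
  unfold cosinePolynomial
  fun_prop

theorem continuous_deriv : Continuous (deriv (cosinePolynomial n a)) := by
  rw [cosinePolynomial.deriv]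
  fun_prop

theorem eq_of_degree_two :
    cosinePolynomial 2 a = fun x ↦ a 0 + a 1 * cos (π * x) + a 2 * cos (2 * π * x) := by
  ext x
  simp [cosinePolynomial, Finset.sum_range_succ]

theorem deriv_of_degree_two :
    deriv (cosinePolynomial 2 a) =
      fun x ↦ -(a 1 * π * sin (π * x)) - 2 * a 2 * π * sin (2 * π * x) := by
  ext x
  simp only [cosinePolynomial.deriv, Finset.sum_range_succ, Finset.sum_range_zero]
  push_cast
  ring_nf

theorem integral_sq :
    ∫ x in (0 : ℝ)..1, cosinePolynomial n a x ^ 2 =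
      ∑ k ∈ Finset.range (n + 1), a k ^ 2 * ∫ x in (0 : ℝ)..1, cos (k * π * x) ^ 2 := by
  unfold cosinePolynomial
  rw [intervalIntegral_sq_sum_of_pairwise_orthogonal]
  · simp only [mul_pow, intervalIntegral.integral_const_mul]
  · exact fun k _ l _ ↦ Continuous.intervalIntegrable (by fun_prop) 0 1
  · intro k _ l _ hkl
    simp only [mul_mul_mul_comm (a k), intervalIntegral.integral_const_mul,
      integral_cos_mul_cos_nat_mul_pi_of_ne hkl, mul_zero]

theorem integral_deriv_sq :
    ∫ x in (0 : ℝ)..1, deriv (cosinePolynomial n a) x ^ 2 =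
      ∑ k ∈ Finset.range (n + 1),
        (a k * (k * π)) ^ 2 * ∫ x in (0 : ℝ)..1, sin (k * π * x) ^ 2 := by
  rw [cosinePolynomial.deriv, intervalIntegral_sq_sum_of_pairwise_orthogonal]
  · simp only [mul_pow, neg_sq, intervalIntegral.integral_const_mul]
  · exact fun k _ l _ ↦ Continuous.intervalIntegrable (by fun_prop) 0 1
  · intro k _ l _ hkl
    simp only [mul_mul_mul_comm (-(a k * (k * π))), intervalIntegral.integral_const_mul,
      integral_sin_mul_sin_nat_mul_pi_of_ne hkl, mul_zero]

theorem integral_deriv_sq_le :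
    ∫ x in (0 : ℝ)..1, deriv (cosinePolynomial n a) x ^ 2 ≤
      (n * π) ^ 2 * ∫ x in (0 : ℝ)..1, cosinePolynomial n a x ^ 2 := by
  rw [integral_deriv_sq, integral_sq, Finset.mul_sum]
  refine Finset.sum_le_sum fun k hk ↦ ?_
  have hkn : (k : ℝ) ≤ n := mod_cast Finset.mem_range_succ_iff.mp hk
  have cos_sq_nonneg : 0 ≤ ∫ x in (0 : ℝ)..1, cos (k * π * x) ^ 2 :=
    intervalIntegral.integral_nonneg zero_le_one fun x _ ↦ sq_nonneg _
  calc (a k * (k * π)) ^ 2 * ∫ x in (0 : ℝ)..1, sin (k * π * x) ^ 2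
      ≤ (a k * (k * π)) ^ 2 * ∫ x in (0 : ℝ)..1, cos (k * π * x) ^ 2 :=
        mul_le_mul_of_nonneg_left (integral_sin_sq_le_integral_cos_sq_nat_mul_pi k) (sq_nonneg _)
    _ = (k * π) ^ 2 * (a k ^ 2 * ∫ x in (0 : ℝ)..1, cos (k * π * x) ^ 2) := by ring
    _ ≤ (n * π) ^ 2 * (a k ^ 2 * ∫ x in (0 : ℝ)..1, cos (k * π * x) ^ 2) := by gcongr

end cosinePolynomial

theorem statement10_general (n : ℕ) (a : ℕ → ℝ) {d D : ℝ} (hd : 0 < d) {σ μ : ℝ → ℝ}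
    (hσm : Measurable σ) (hμm : Measurable μ)
    (hσD : ∀ x ∈ Set.Icc (0 : ℝ) 1, σ x ^ 2 ≤ D)
    (hμD : ∀ x ∈ Set.Icc (0 : ℝ) 1, μ x ≤ D)
    (hμd : ∀ x ∈ Set.Icc (0 : ℝ) 1, d ≤ μ x) :
    ∫ x in (0 : ℝ)..1, deriv (cosinePolynomial n a) x ^ 2 * σ x ^ 2 * μ x
      ≤ (n * π) ^ 2 * D ^ 2 / d * ∫ x in (0 : ℝ)..1, cosinePolynomial n a x ^ 2 * μ x := by
  have bound_ae {p : ℝ → Prop} (hp : ∀ x ∈ Set.Icc (0 : ℝ) 1, p x) :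
      ∀ᵐ x ∂volume.restrict (Set.Ioc (0 : ℝ) 1), p x :=
    ae_restrict_of_forall_mem measurableSet_Ioc fun x hx ↦ hp x (Set.Ioc_subset_Icc_self hx)
  have hμ_nonneg (x) (hx : x ∈ Set.Icc (0 : ℝ) 1) : 0 ≤ μ x := hd.le.trans (hμd x hx)
  have hσμ_le (x) (hx : x ∈ Set.Icc (0 : ℝ) 1) : σ x ^ 2 * μ x ≤ D ^ 2 :=
    (mul_le_mul (hσD x hx) (hμD x hx) (hμ_nonneg x hx) ((sq_nonneg _).trans (hσD x hx))).trans_eq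
      (sq D).symm
  have hu : Integrable (fun x ↦ cosinePolynomial n a x ^ 2) (volume.restrict (Set.Ioc 0 1)) :=
    ((cosinePolynomial.continuous n a).pow 2).integrableOn_Ioc
  have hu' : Integrable (fun x ↦ deriv (cosinePolynomial n a) x ^ 2)
      (volume.restrict (Set.Ioc 0 1)) :=
    ((cosinePolynomial.continuous_deriv n a).pow 2).integrableOn_Ioc
  have bernstein := cosinePolynomial.integral_deriv_sq_le n a
  simp only [intervalIntegral.integral_of_le zero_le_one, mul_assoc (_ ^ 2) (σ _ ^ 2)]
    at bernstein ⊢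
  refine integral_mul_le_mul_integral_mul_of_integral_le (by positivity) hd (by positivity) hu' hu
    (hu'.mul_bdd (c := D ^ 2) (by fun_prop) (bound_ae fun x hx ↦ ?_))
    (hu.mul_bdd (c := D) (by fun_prop) (bound_ae fun x hx ↦ ?_))
    (.of_forall fun _ ↦ sq_nonneg _) (.of_forall fun _ ↦ sq_nonneg _)
    (bound_ae hσμ_le) (bound_ae hμd) bernstein
  · rw [norm_of_nonneg (mul_nonneg (sq_nonneg _) (hμ_nonneg x hx))]
    exact hσμ_le x hx
  · rw [norm_of_nonneg (hμ_nonneg x hx)]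
    exact hμD x hx

/-- For every `u` in the span of `{1, cos(πx), cos(2πx)}` on `[0,1]` one has
`∫₀¹ u'² σ² μ ≤ (4π² D²/d) ∫₀¹ u² μ`, where `σ² ≤ D`, `d ≤ μ ≤ D`. -/
theorem statement10 (d D : ℝ) (hd : 0 < d) (hdD : d ≤ D)
    (σ μ : ℝ → ℝ) (hσm : Measurable σ) (hμm : Measurable μ)
    (hσD : ∀ x ∈ Set.Icc (0:ℝ) 1, (σ x)^2 ≤ D)
    (hμD : ∀ x ∈ Set.Icc (0:ℝ) 1, μ x ≤ D)
    (hμd : ∀ x ∈ Set.Icc (0:ℝ) 1, d ≤ μ x)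
    (a b c : ℝ) (u u' : ℝ → ℝ)
    (hu : u = fun x => a + b * Real.cos (Real.pi * x) + c * Real.cos (2 * Real.pi * x))
    (hu' : u' = fun x => -(b * Real.pi * Real.sin (Real.pi * x))
      - 2 * c * Real.pi * Real.sin (2 * Real.pi * x)) :
    ∫ x in (0:ℝ)..1, (u' x)^2 * (σ x)^2 * μ x
      ≤ (4 * Real.pi^2 * D^2 / d) * ∫ x in (0:ℝ)..1, (u x)^2 * μ x := by
  let coeff : ℕ → ℝ := fun | 0 => a | 1 => b | _ => c
  rw [hu.trans (cosinePolynomial.eq_of_degree_two coeff).symm,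
    hu'.trans (cosinePolynomial.deriv_of_degree_two coeff).symm,
    show 4 * π ^ 2 = ((2 : ℕ) * π) ^ 2 by push_cast; ring]
  exact statement10_general 2 coeff hd hσm hμm hσD hμD hμd
end
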